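/- arXiv:math/0412163 — 2 statements merged into one kernel-verified Lean document; each statement's English description precedes it below -/
import Mathlib

section
/- Let N ≥ 1, let 0 < ρ < ρ′, and let A = (A₁,…,A_N) be an N-tuple of bounded linear operators on a complex Hilbert space X. Then w_{ρ′,N}(A) ≤ w_{ρ,N}(A) ≤ (2ρ′/ρ − 1)·w_{ρ′,N}(A). -/
open ContinuousLinearMap

noncomputable section

/-- A continuous linear operator on a complex Hilbert space is unitary. -/
def IsUnitaryOp {Y : Type*} [NormedAddCommGroup Y] [InnerProductSpace ℂ Y] [CompleteSpace Y]
    (T : Y →L[ℂ] Y) : Prop :=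
  T ∘L adjoint T = 1 ∧ adjoint T ∘L T = 1

/-- A unitary `ρ`-dilation of an `N`-tuple of bounded operators on a complex Hilbert space `X`:
a complex Hilbert space `Y`, a linear isometry `ι : X → Y`, and an `N`-tuple `At` of operators
on `Y` such that every unimodular combination `ζ₁At₁ + ⋯ + ζ_N At_N` is unitary, and
`(z₁A₁ + ⋯ + z_N A_N)ⁿ = ρ · ι* ∘ (z₁At₁ + ⋯ + z_N At_N)ⁿ ∘ ι` for all `z ∈ ℂ^N` and `n ≥ 1`. -/
structure UnitaryRhoDilation (N : ℕ) (ρ : ℝ) (X : Type*) [NormedAddCommGroup X]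
    [InnerProductSpace ℂ X] [CompleteSpace X] (A : Fin N → X →L[ℂ] X) where
  Y : Type
  [instN : NormedAddCommGroup Y]
  [instI : InnerProductSpace ℂ Y]
  [instC : CompleteSpace Y]
  ι : X →L[ℂ] Y
  isom : Isometry ι
  At : Fin N → Y →L[ℂ] Y
  unit : ∀ ζ : Fin N → ℂ, (∀ k, ‖ζ k‖ = 1) → IsUnitaryOp (∑ k, ζ k • At k)
  dil : ∀ (z : Fin N → ℂ) (n : ℕ), 1 ≤ n →
    (∑ k, z k • A k) ^ n = (ρ : ℂ) • (adjoint ι ∘L (((∑ k, z k • At k) ^ n) ∘L ι))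

/-- The class `C_{ρ,N}`: `N`-tuples of bounded operators admitting a unitary `ρ`-dilation. -/
def MemC (N : ℕ) (ρ : ℝ) {X : Type*} [NormedAddCommGroup X] [InnerProductSpace ℂ X]
    [CompleteSpace X] (A : Fin N → X →L[ℂ] X) : Prop :=
  Nonempty (UnitaryRhoDilation N ρ X A)

/-- The set of positive scalings `u` with `(1/u)·A ∈ C_{ρ,N}`. -/
def wSet (N : ℕ) (ρ : ℝ) {X : Type*} [NormedAddCommGroup X] [InnerProductSpace ℂ X]
    [CompleteSpace X] (A : Fin N → X →L[ℂ] X) : Set ℝ :=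
  {u : ℝ | 0 < u ∧ MemC N ρ (fun k => ((u : ℂ))⁻¹ • A k)}

/-- The operator radius `w_{ρ,N}(A) = inf { u > 0 : (1/u)·A ∈ C_{ρ,N} }`. -/
def wRad (N : ℕ) (ρ : ℝ) {X : Type*} [NormedAddCommGroup X] [InnerProductSpace ℂ X]
    [CompleteSpace X] (A : Fin N → X →L[ℂ] X) : ℝ :=
  sInf (wSet N ρ A)

/-!
If `A` has a unitary `ρ`-dilation `Ã`, and a unitary `V` has a unit vector `g` with
`⟪g, Vⁿ g⟫ = c tⁿ` for all `n ≥ 1`, then `V ⊗ Ã`, compressed along `x ↦ g ⊗ ι x`, is a unitary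
`ρ₁`-dilation of `t • A` as soon as `c ρ₁ = ρ`. Both inequalities come from such a pair `(V, g)`,
that is, from a probability measure on the circle with moments `c tⁿ`. For `t = 1` and
`0 ≤ c ≤ 1` the measure is a mixture of Haar measure and a point mass at `1`. For `0 < t < 1` it
has density `1 + 2c ∑ tⁿ cos nθ`, which is nonnegative up to `c = (1 + t) / (2t)`; this extremal
`c` produces the constant `2ρ' / ρ - 1 = t⁻¹`.
-/

open scoped ComplexConjugate Pointwise

section PermMap

variable {𝕜 I E F : Type*} [RCLike 𝕜]

theorem sum_norm_rpow_apply_comp_le [NormedAddCommGroup E] [NormedSpace 𝕜 E]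
    [NormedAddCommGroup F] [NormedSpace 𝕜 F] {J : Type*} {p : ENNReal} (hp : 0 < p.toReal)
    (σ : J ↪ I) (T : E →L[𝕜] F) (f : lp (fun _ : I => E) p) (s : Finset J) :
    ∑ j ∈ s, ‖T (f (σ j))‖ ^ p.toReal ≤ (‖T‖ * ‖f‖) ^ p.toReal := by
  rw [Real.mul_rpow (norm_nonneg _) (lp.norm_nonneg' f)]
  calc ∑ j ∈ s, ‖T (f (σ j))‖ ^ p.toReal
      ≤ ∑ j ∈ s, ‖T‖ ^ p.toReal * ‖f (σ j)‖ ^ p.toReal := by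
        gcongr with j
        rw [← Real.mul_rpow (norm_nonneg _) (norm_nonneg _)]
        gcongr
        exact T.le_opNorm _
    _ = ‖T‖ ^ p.toReal * ∑ i ∈ s.map σ, ‖f i‖ ^ p.toReal := by
        rw [Finset.sum_map, Finset.mul_sum]
    _ ≤ ‖T‖ ^ p.toReal * ‖f‖ ^ p.toReal := by
        gcongr
        exact lp.sum_rpow_le_norm_rpow hp f _

variable [NormedAddCommGroup E] [NormedSpace 𝕜 E]

/-- The operator `f ↦ T ∘ f ∘ σ` on `ℓ²(I; E) = ℓ²(I) ⊗ E`, which is the tensor product of the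
permutation operator of `σ` with `T`. -/
def lpPermMap (σ : Equiv.Perm I) (T : E →L[𝕜] E) :
    lp (fun _ : I => E) 2 →L[𝕜] lp (fun _ : I => E) 2 :=
  LinearMap.mkContinuous
    { toFun := fun f => ⟨fun i => T (f (σ i)),
        memℓp_gen' (sum_norm_rpow_apply_comp_le (by norm_num) σ.toEmbedding T f)⟩
      map_add' := fun f g => by ext i; exact map_add T _ _
      map_smul' := fun a f => by ext i; exact map_smul T a _ }
    ‖T‖ fun f => lp.norm_le_of_forall_sum_le (by norm_num) (by positivity)
      (sum_norm_rpow_apply_comp_le (by norm_num) σ.toEmbedding T f)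

@[simp]
theorem lpPermMap_apply (σ : Equiv.Perm I) (T : E →L[𝕜] E) (f : lp (fun _ : I => E) 2) (i : I) :
    lpPermMap σ T f i = T (f (σ i)) := rfl

theorem lpPermMap_comp (σ τ : Equiv.Perm I) (S T : E →L[𝕜] E) :
    lpPermMap σ S ∘L lpPermMap τ T = lpPermMap (τ * σ) (S ∘L T) := rfl

theorem lpPermMap_one : lpPermMap (1 : Equiv.Perm I) (1 : E →L[𝕜] E) = 1 := rfl

theorem lpPermMap_pow (σ : Equiv.Perm I) (T : E →L[𝕜] E) (n : ℕ) :
    lpPermMap σ T ^ n = lpPermMap (σ ^ n) (T ^ n) := by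
  induction n with
  | zero => exact lpPermMap_one.symm
  | succ n ih =>
    rw [pow_succ, ih, pow_succ' σ, pow_succ T]
    exact lpPermMap_comp _ _ _ _

theorem sum_smul_lpPermMap {K : Type*} (s : Finset K) (σ : Equiv.Perm I) (z : K → 𝕜)
    (T : K → E →L[𝕜] E) :
    ∑ k ∈ s, z k • lpPermMap σ (T k) = lpPermMap σ (∑ k ∈ s, z k • T k) := by
  ext f i
  simp only [FunLike.coe_sum, Finset.sum_apply, lp.coeFn_sum]
  simp

theorem adjoint_lpPermMap {H : Type*} [NormedAddCommGroup H] [InnerProductSpace 𝕜 H]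
    [CompleteSpace H] (σ : Equiv.Perm I) (T : H →L[𝕜] H) :
    adjoint (lpPermMap σ T) = lpPermMap σ⁻¹ (adjoint T) := by
  refine (eq_adjoint_iff _ _).2 (fun f h => ?_) |>.symm
  rw [lp.inner_eq_tsum, lp.inner_eq_tsum, ← σ.tsum_eq]
  simp [adjoint_inner_left]

end PermMap

theorem IsUnitaryOp.lpPermMap {I Y : Type*} [NormedAddCommGroup Y] [InnerProductSpace ℂ Y]
    [CompleteSpace Y] {T : Y →L[ℂ] Y} (hT : IsUnitaryOp T) (σ : Equiv.Perm I) :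
    IsUnitaryOp (lpPermMap σ T) := by
  constructor
  · rw [adjoint_lpPermMap, lpPermMap_comp, hT.1, inv_mul_cancel, lpPermMap_one]
  · rw [adjoint_lpPermMap, lpPermMap_comp, hT.2, mul_inv_cancel, lpPermMap_one]

section TensorLeft

variable {𝕜 I E : Type*} [RCLike 𝕜] [NormedAddCommGroup E] [NormedSpace 𝕜 E]

theorem hasSum_norm_smul_rpow_two {g : I → 𝕜} (hg : HasSum (fun i => ‖g i‖ ^ 2) 1) (y : E) :
    HasSum (fun i => ‖g i • y‖ ^ (2 : ENNReal).toReal) (‖y‖ ^ 2) := by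
  simpa [norm_smul, mul_pow] using hg.mul_right (‖y‖ ^ 2)

/-- The isometry `y ↦ g ⊗ y = (g i • y)ᵢ` of `E` into `ℓ²(I; E)`, for a unit vector `g` of
`ℓ²(I)`. -/
def lpTensorLeft (g : I → 𝕜) (hg : HasSum (fun i => ‖g i‖ ^ 2) 1) :
    E →ₗᵢ[𝕜] lp (fun _ : I => E) 2 where
  toFun y := ⟨fun i => g i • y, memℓp_gen (hasSum_norm_smul_rpow_two hg y).summable⟩
  map_add' x y := by ext i; exact smul_add _ _ _
  map_smul' a y := by ext i; exact smul_comm _ _ _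
  norm_map' y := by
    have h_sum := (hasSum_norm_smul_rpow_two hg y).tsum_eq
    rw [← sq_eq_sq₀ (norm_nonneg _) (norm_nonneg _), ← h_sum, ← Real.rpow_two]
    exact lp.norm_rpow_eq_tsum (by norm_num) _

@[simp]
theorem lpTensorLeft_apply (g : I → 𝕜) (hg : HasSum (fun i => ‖g i‖ ^ 2) 1) (y : E) (i : I) :
    lpTensorLeft g hg y i = g i • y := rfl

theorem inner_lpTensorLeft_lpPermMap {H : Type*} [NormedAddCommGroup H] [InnerProductSpace 𝕜 H]
    {g : I → 𝕜} (hg : HasSum (fun i => ‖g i‖ ^ 2) 1) {σ : Equiv.Perm I} {a : 𝕜}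
    (ha : HasSum (fun i => conj (g i) * g (σ i)) a) (T : H →L[𝕜] H) (x y : H) :
    inner 𝕜 (lpTensorLeft g hg y) (lpPermMap σ T (lpTensorLeft g hg x)) =
      a * inner 𝕜 y (T x) := by
  rw [lp.inner_eq_tsum, ← (ha.mul_right (inner 𝕜 y (T x))).tsum_eq]
  simp [inner_smul_left, inner_smul_right, mul_assoc, mul_left_comm]

end TensorLeft

section Moments

variable {I : Type*}

/-- `g` is a unit vector of `ℓ²(I)` whose moments under the permutation operator
`V f = f ∘ σ` are geometric: `⟪g, Vⁿ g⟫ = c tⁿ` for `n ≥ 1`. -/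
structure HasGeometricMoments {𝕜 : Type*} [RCLike 𝕜] (σ : Equiv.Perm I) (g : I → 𝕜)
    (c t : 𝕜) : Prop where
  hasSum_norm_sq : HasSum (fun i => ‖g i‖ ^ 2) 1
  hasSum_conj_mul_pow_apply :
    ∀ n : ℕ, 1 ≤ n → HasSum (fun i => conj (g i) * g ((σ ^ n) i)) (c * t ^ n)

theorem HasGeometricMoments.ofReal {σ : Equiv.Perm I} {g : I → ℝ} {c t : ℝ}
    (h : HasGeometricMoments σ g c t) :
    HasGeometricMoments σ (fun i => (g i : ℂ)) c t where
  hasSum_norm_sq := by simpa using h.hasSum_norm_sq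
  hasSum_conj_mul_pow_apply n hn := by
    simpa using Complex.hasSum_ofReal.2 (h.hasSum_conj_mul_pow_apply n hn)

end Moments

section MemC

variable {N : ℕ} {ρ ρ₁ : ℝ} {X : Type*} [NormedAddCommGroup X] [InnerProductSpace ℂ X]
  [CompleteSpace X] {A : Fin N → X →L[ℂ] X}

theorem MemC.smul_of_hasGeometricMoments {I : Type} {σ : Equiv.Perm I} {g : I → ℂ} {c t : ℂ}
    (hg : HasGeometricMoments σ g c t) (hρ : (ρ₁ : ℂ) * c = ρ) (hA : MemC N ρ A) :
    MemC N ρ₁ fun k => t • A k := by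
  obtain ⟨D⟩ := hA
  let := D.instN
  let := D.instI
  have := D.instC
  let J : D.Y →ₗᵢ[ℂ] lp (fun _ : I => D.Y) 2 := lpTensorLeft g hg.hasSum_norm_sq
  refine ⟨{ Y := lp (fun _ : I => D.Y) 2
            ι := J.toContinuousLinearMap ∘L D.ι
            isom := J.isometry.comp D.isom
            At := fun k => lpPermMap σ (D.At k)
            unit := fun ζ hζ => ?_
            dil := fun z n hn => ?_ }⟩
  · rw [sum_smul_lpPermMap]
    exact (D.unit ζ hζ).lpPermMap σ
  · have h_pow : (∑ k, z k • t • A k) ^ n =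
        (t ^ n * ρ) • (adjoint D.ι ∘L (((∑ k, z k • D.At k) ^ n) ∘L D.ι)) := by
      simp_rw [smul_comm _ t, ← Finset.smul_sum]
      rw [smul_pow, D.dil z n hn, smul_smul]
    rw [h_pow, sum_smul_lpPermMap, lpPermMap_pow, ← hρ]
    ext x
    refine ext_inner_left ℂ fun y => ?_
    have h_inner := inner_lpTensorLeft_lpPermMap hg.hasSum_norm_sq
      (hg.hasSum_conj_mul_pow_apply n hn) ((∑ k, z k • D.At k) ^ n) (D.ι x) (D.ι y)
    simp only [smul_apply, comp_apply, inner_smul_right, adjoint_inner_right,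
      LinearIsometry.coe_toContinuousLinearMap, J, h_inner]
    ring

end MemC

section PointMass

/-- The unit vector `(√c, √(1 - c) δ₀)` of `ℂ ⊕ ℓ²(ℤ)`. -/
def pointMassVector (c : ℝ) : Unit ⊕ ℤ → ℝ :=
  Sum.elim (fun _ => √c) (Pi.single 0 √(1 - c))

theorem hasGeometricMoments_pointMassVector {c : ℝ} (hc₀ : 0 ≤ c) (hc₁ : c ≤ 1) :
    HasGeometricMoments (Equiv.Perm.sumCongrHom Unit ℤ (1, Equiv.addRight 1))
      (pointMassVector c) c 1 where
  hasSum_norm_sq := by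
    have h_mass : (1 : ℝ) = ∑ i ∈ {.inl (), .inr 0}, ‖pointMassVector c i‖ ^ 2 := by
      simp [pointMassVector, Real.sq_sqrt, hc₀, hc₁]
    rw [h_mass]
    refine hasSum_sum_of_ne_finset_zero ?_
    rintro (_ | k) hk
    · simp at hk
    · have hk₀ : k ≠ 0 := by simpa using hk
      simp [pointMassVector, hk₀]
  hasSum_conj_mul_pow_apply n hn := by
    rw [← map_pow, Prod.pow_mk, one_pow, Equiv.nsmul_addRight]
    convert hasSum_single (Sum.inl ()) ?_ using 1
    · simp [pointMassVector, hc₀]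
    · rintro (_ | k) hk
      · exact absurd rfl hk
      · by_cases h : k = 0
        · subst h
          simp [pointMassVector, Pi.single_apply]
          lia
        · simp [pointMassVector, h]

end PointMass

section Poisson

/-- The Taylor coefficients of `√((1 - r) / 2) * (1 + z) / (1 - r * z)`, extended by zero to
negative indices. On the unit circle the squared modulus of this function is the density
`1 + (1 + r) / (2 * r) * ∑_{n ≠ 0} r ^ |n| * z ^ n`. -/
def poissonFactor (r : ℝ) : ℤ → ℝ
  | .ofNat 0 => √((1 - r) / 2)
  | .ofNat (m + 1) => √((1 - r) / 2) * (1 + r) * r ^ m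
  | .negSucc _ => 0

theorem sq_poissonFactor_zero {r : ℝ} (hr : r ≤ 1) : poissonFactor r 0 ^ 2 = (1 - r) / 2 :=
  Real.sq_sqrt (by linarith)

theorem poissonFactor_natCast_add_one (r : ℝ) (m : ℕ) :
    poissonFactor r (m + 1) = poissonFactor r 0 * (1 + r) * r ^ m := rfl

theorem poissonFactor_of_neg (r : ℝ) {k : ℤ} (hk : k < 0) : poissonFactor r k = 0 := by
  obtain ⟨m, rfl⟩ := Int.eq_negSucc_of_lt_zero hk
  rfl

theorem hasSum_poissonFactor_mul_add {r : ℝ} (hr : |r| < 1) (n : ℕ) :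
    HasSum (fun k : ℤ => poissonFactor r k * poissonFactor r (k + n))
      (poissonFactor r 0 * poissonFactor r n + (1 + r) / 2 * r ^ n) := by
  have ⟨hr₁, hr₂⟩ := abs_lt.1 hr
  have h_supp : ∀ k ∉ Set.range ((↑) : ℕ → ℤ),
      poissonFactor r k * poissonFactor r (k + n) = 0 := fun k hk => by
    rw [poissonFactor_of_neg r (by_contra fun h => hk ⟨k.toNat, by lia⟩), zero_mul]
  have h_term (m : ℕ) : poissonFactor r ↑(m + 1) * poissonFactor r (↑(m + 1) + n) =
      (1 - r) / 2 * (1 + r) ^ 2 * r ^ n * (r * r) ^ m := by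
    have h_shift : ((m + 1 : ℕ) : ℤ) + n = (m + n : ℕ) + 1 := by push_cast; ring
    rw [h_shift, Nat.cast_succ, poissonFactor_natCast_add_one, poissonFactor_natCast_add_one,
      ← sq_poissonFactor_zero hr₂.le]
    ring
  have h_value : (1 - r) / 2 * (1 + r) ^ 2 * r ^ n * (1 - r * r)⁻¹ = (1 + r) / 2 * r ^ n := by
    have h₁ : 1 - r ≠ 0 := by linarith
    have h₂ : 1 + r ≠ 0 := by linarith
    rw [show 1 - r * r = (1 - r) * (1 + r) by ring]
    field_simp
  have h_tail : HasSum (fun m : ℕ => (1 - r) / 2 * (1 + r) ^ 2 * r ^ n * (r * r) ^ m)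
      ((1 + r) / 2 * r ^ n) :=
    h_value ▸ (hasSum_geometric_of_lt_one (mul_self_nonneg r) (by nlinarith)).mul_left _
  rw [← Nat.cast_injective.hasSum_iff h_supp, ← hasSum_nat_add_iff' 1]
  simpa only [Function.comp_def, h_term, Finset.range_one, Finset.sum_singleton, Nat.cast_zero,
    zero_add, add_sub_cancel_left] using h_tail

theorem hasGeometricMoments_poissonFactor {r : ℝ} (hr₀ : r ≠ 0) (hr : |r| < 1) :
    HasGeometricMoments (Equiv.addRight (1 : ℤ)) (poissonFactor r) ((1 + r) / (2 * r)) r where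
  hasSum_norm_sq := by
    have h_value : poissonFactor r 0 * poissonFactor r 0 + (1 + r) / 2 = 1 := by
      rw [← sq, sq_poissonFactor_zero (abs_lt.1 hr).2.le]
      ring
    simpa [h_value, sq] using hasSum_poissonFactor_mul_add hr 0
  hasSum_conj_mul_pow_apply n hn := by
    obtain ⟨m, rfl⟩ := Nat.exists_eq_add_of_le' hn
    have h_value : poissonFactor r 0 * poissonFactor r (m + 1 : ℕ) + (1 + r) / 2 * r ^ (m + 1) =
        (1 + r) / (2 * r) * r ^ (m + 1) := by
      rw [Nat.cast_succ, poissonFactor_natCast_add_one, mul_assoc (poissonFactor r 0),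
        ← mul_assoc, ← sq, sq_poissonFactor_zero (abs_lt.1 hr).2.le]
      field_simp
      ring
    simpa only [h_value, Equiv.nsmul_addRight, Equiv.coe_addRight, nsmul_one, conj_trivial]
      using hasSum_poissonFactor_mul_add hr (m + 1)

end Poisson

section Radius

variable {N : ℕ} {ρ ρ' : ℝ} {X : Type*} [NormedAddCommGroup X] [InnerProductSpace ℂ X]
  [CompleteSpace X] {A : Fin N → X →L[ℂ] X}

theorem MemC.mono (hρ : 0 ≤ ρ) (hρρ' : ρ ≤ ρ') (hA : MemC N ρ A) : MemC N ρ' A := by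
  have h_mul : ρ' * (ρ / ρ') = ρ := mul_div_cancel_of_imp' fun h => by linarith
  have hg := hasGeometricMoments_pointMassVector (c := ρ / ρ') (div_nonneg hρ (hρ.trans hρρ'))
    (div_le_one_of_le₀ hρρ' (hρ.trans hρρ'))
  simpa using hA.smul_of_hasGeometricMoments (ρ₁ := ρ') hg.ofReal (mod_cast h_mul)

theorem MemC.inv_smul {q : ℝ} (hq : 1 < q) (hA : MemC N ρ A) :
    MemC N (2 / (q + 1) * ρ) fun k => (q : ℂ)⁻¹ • A k := by
  have hq₀ : 0 < q := one_pos.trans hq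
  have hg := hasGeometricMoments_poissonFactor (inv_ne_zero hq₀.ne')
    (by rw [abs_of_pos (inv_pos.2 hq₀)]; exact inv_lt_one_of_one_lt₀ hq)
  have h_mul : 2 / (q + 1) * ρ * ((1 + q⁻¹) / (2 * q⁻¹)) = ρ := by field_simp
  simpa using hA.smul_of_hasGeometricMoments hg.ofReal (mod_cast h_mul)

theorem bddBelow_wSet : BddBelow (wSet N ρ A) := ⟨0, fun _ hu => hu.1.le⟩

theorem wSet_subset_wSet (hρ : 0 ≤ ρ) (hρρ' : ρ ≤ ρ') : wSet N ρ A ⊆ wSet N ρ' A :=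
  fun _ hu => ⟨hu.1, hu.2.mono hρ hρρ'⟩

theorem smul_wSet_subset_wSet {q : ℝ} (hq : 1 < q) :
    q • wSet N ρ A ⊆ wSet N (2 / (q + 1) * ρ) A := by
  rintro _ ⟨u, ⟨hu, hA⟩, rfl⟩
  refine ⟨mul_pos (one_pos.trans hq) hu, ?_⟩
  simpa [smul_smul, mul_comm] using hA.inv_smul hq

end Radius

/-- for `0 < ρ < ρ'` one has
`w_{ρ',N}(A) ≤ w_{ρ,N}(A) ≤ (2ρ'/ρ − 1)·w_{ρ',N}(A)`. -/
theorem wRad_antitone_bounds (N : ℕ) (hN : 1 ≤ N) (ρ ρ' : ℝ) (hρ : 0 < ρ) (hρρ' : ρ < ρ')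
    {X : Type*} [NormedAddCommGroup X] [InnerProductSpace ℂ X] [CompleteSpace X]
    (A : Fin N → X →L[ℂ] X) :
    wRad N ρ' A ≤ wRad N ρ A ∧ wRad N ρ A ≤ (2 * ρ' / ρ - 1) * wRad N ρ' A := by
  have hq : 1 < 2 * ρ' / ρ - 1 := by
    have : 1 < ρ' / ρ := (one_lt_div hρ).2 hρρ'
    rw [mul_div_assoc]
    linarith
  have h_mono : wSet N ρ A ⊆ wSet N ρ' A := wSet_subset_wSet hρ.le hρρ'.le
  have h_smul : (2 * ρ' / ρ - 1) • wSet N ρ' A ⊆ wSet N ρ A := by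
    have h_const : 2 / (2 * ρ' / ρ - 1 + 1) * ρ' = ρ := by
      have := hρ.trans hρρ'
      field_simp
      ring
    simpa only [h_const] using smul_wSet_subset_wSet (ρ := ρ') (A := A) hq
  rw [wRad, wRad, ← smul_eq_mul, ← Real.sInf_smul_of_nonneg (by linarith)]
  -- Dilation spaces are required to live in `Type`, so both sets are empty if `X` is too large.
  obtain h_empty | h_ne := (wSet N ρ' A).eq_empty_or_nonempty
  · simp [h_empty, Set.subset_empty_iff.1 (h_empty ▸ h_mono)]
  · exact ⟨csInf_le_csInf bddBelow_wSet (h_ne.smul_set.mono h_smul) h_mono,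
      csInf_le_csInf bddBelow_wSet h_ne.smul_set h_smul⟩
end
end

section
/- Let X be a complex Hilbert space, A a bounded linear operator on X, and 0 < ρ ≤ 1. Then w_ρ(A) ≥ (2/ρ − 1)·w₂(A), where w_s(A) := inf { u > 0 : (1/u)·A ∈ C_s } for s > 0. -/
open ContinuousLinearMap

noncomputable section

/-- A unitary `ρ`-dilation of a single bounded operator `A` on a complex Hilbert space `X`:
a complex Hilbert space `Y`, a linear isometry `ι : X → Y`, and a unitary operator `U` on `Y`
such that `Aⁿ = ρ · ι* ∘ Uⁿ ∘ ι` for every integer `n ≥ 1`. -/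
structure UnitaryRhoDilation1 (ρ : ℝ) (X : Type*) [NormedAddCommGroup X]
    [InnerProductSpace ℂ X] [CompleteSpace X] (A : X →L[ℂ] X) where
  Y : Type
  [instN : NormedAddCommGroup Y]
  [instI : InnerProductSpace ℂ Y]
  [instC : CompleteSpace Y]
  ι : X →L[ℂ] Y
  isom : Isometry ι
  U : Y →L[ℂ] Y
  unit : U ∘L adjoint U = 1 ∧ adjoint U ∘L U = 1
  dil : ∀ n : ℕ, 1 ≤ n → A ^ n = (ρ : ℂ) • (adjoint ι ∘L ((U ^ n) ∘L ι))

/-- The class `C_ρ` of Sz.-Nagy and Foiaş: bounded operators admitting a unitary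
`ρ`-dilation. -/
def MemC1 (ρ : ℝ) {X : Type*} [NormedAddCommGroup X] [InnerProductSpace ℂ X]
    [CompleteSpace X] (A : X →L[ℂ] X) : Prop :=
  Nonempty (UnitaryRhoDilation1 ρ X A)

/-- The operator radius `w_ρ(A) = inf { u > 0 : (1/u)A ∈ C_ρ }`. -/
def wRad1 (ρ : ℝ) {X : Type*} [NormedAddCommGroup X] [InnerProductSpace ℂ X]
    [CompleteSpace X] (A : X →L[ℂ] X) : ℝ :=
  sInf {u : ℝ | 0 < u ∧ MemC1 ρ (((u : ℂ))⁻¹ • A)}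

/-!
An operator `T` has a unitary `ρ`-dilation exactly when the block Toeplitz matrix with entries `1`
on the diagonal, `ρ⁻¹ Tⁿ` below it and the adjoints above it is positive. Testing this matrix
against the vectors `k (n + 1) - T (k n)` of a path with `k 0 = 0` makes the double sum telescope to
`∑ ‖k (n + 1)‖² - 2 (1 - ρ⁻¹) Re ⟪k (n + 1), T (k n)⟫ + (1 - 2 ρ⁻¹) ‖T (k n)‖²`.

Along the paths `k n = zⁿ • h` with `|z| = 1` this says that `(2 / ρ - 1) |⟪h, T h⟫| ≤ ‖h‖²`. For
`ρ = 2` the converse holds for every `S`: positivity only asks that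
`∑ Re ⟪k (n + 1), S (k n)⟫ ≤ ∑ ‖k (n + 1)‖²`, and, as the discrete Fourier transform diagonalizes
the cyclic shift, this follows from `|⟪h, S h⟫| ≤ ‖h‖²`. Hence `T ∈ C_ρ` implies
`(2 / ρ - 1) • T ∈ C_2`.
-/

open RCLike Finset
open scoped InnerProductSpace ComplexConjugate ZMod

lemma re_ofReal_inv_mul (r : ℝ) (z : ℂ) : re ((r : ℂ)⁻¹ * z) = r⁻¹ * re z := by
  rw [← Complex.ofReal_inv]
  exact Complex.re_ofReal_mul _ _

lemma re_sum_range_sum_range_of_conj_symm {𝕜 : Type*} [RCLike 𝕜] {a : ℕ → ℕ → 𝕜}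
    (ha : ∀ i j, conj (a i j) = a j i) (N : ℕ) :
    re (∑ i ∈ range N, ∑ j ∈ range N, a i j) =
      ∑ n ∈ range N, (re (a n n) + 2 * re (∑ j ∈ range n, a n j)) := by
  induction N with
  | zero => simp
  | succ N ih =>
    have hcol : ∑ i ∈ range N, a i N = conj (∑ j ∈ range N, a N j) := by
      simp only [map_sum, ha]
    simp only [sum_range_succ, sum_add_distrib, hcol, map_add, conj_re, ih]
    ring

section Kolmogorov

variable {𝕜 E : Type*} [RCLike 𝕜] [NormedAddCommGroup E] [InnerProductSpace 𝕜 E]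
  [CompleteSpace E]

lemma exists_linearIsometryEquiv_of_inner_eq {F ι : Type*} [NormedAddCommGroup F]
    [InnerProductSpace 𝕜 F] [CompleteSpace F] {v : ι → E} {w : ι → F}
    (hv : (Submodule.span 𝕜 (Set.range v)).topologicalClosure = ⊤)
    (hw : (Submodule.span 𝕜 (Set.range w)).topologicalClosure = ⊤)
    (h : ∀ i j, ⟪w i, w j⟫_𝕜 = ⟪v i, v j⟫_𝕜) :
    ∃ U : E ≃ₗᵢ[𝕜] F, ∀ i, U (v i) = w i := by
  have hnorm (f : ι →₀ 𝕜) :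
      ‖Finsupp.linearCombination 𝕜 w f‖ = ‖Finsupp.linearCombination 𝕜 v f‖ := by
    simp only [norm_eq_sqrt_re_inner (𝕜 := 𝕜), Finsupp.linearCombination_apply, Finsupp.sum_inner,
      Finsupp.inner_sum, inner_smul_left, inner_smul_right, h]
  rw [← Finsupp.range_linearCombination, ← Submodule.dense_iff_topologicalClosure_eq_top] at hv hw
  let U := (LinearEquiv.refl 𝕜 (ι →₀ 𝕜)).extendOfIsometry
    (Finsupp.linearCombination 𝕜 v) (Finsupp.linearCombination 𝕜 w) hv hw hnorm
  refine ⟨U, fun i => ?_⟩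
  simpa [U] using (LinearEquiv.refl 𝕜 (ι →₀ 𝕜)).extendOfIsometry_eq
    (Finsupp.linearCombination 𝕜 v) (Finsupp.linearCombination 𝕜 w) hv hw hnorm
    (Finsupp.single i 1)

lemma exists_linearIsometryEquiv_kerFun {α V : Type*} [NormedAddCommGroup V]
    [InnerProductSpace 𝕜 V] [CompleteSpace V] [RKHS 𝕜 E α V] (φ : Equiv.Perm α)
    (hφ : ∀ x y, RKHS.kernel E (φ x) (φ y) = RKHS.kernel E x y) :
    ∃ U : E ≃ₗᵢ[𝕜] E, ∀ x v, U (RKHS.kerFun E x v) = RKHS.kerFun E (φ x) v := by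
  have hdense : (Submodule.span 𝕜 (Set.range fun p : α × V => RKHS.kerFun E p.1 p.2)
      ).topologicalClosure = ⊤ := by
    have hrange : Set.range (fun p : α × V => RKHS.kerFun E p.1 p.2) =
        {RKHS.kerFun E x v | (x) (v)} := by
      ext; simp
    rw [hrange, RKHS.kerFun_dense]
  have hrange : Set.range (fun p : α × V => RKHS.kerFun E (φ p.1) p.2) =
      Set.range (fun p : α × V => RKHS.kerFun E p.1 p.2) :=
    (φ.prodCongr (Equiv.refl V)).surjective.range_comp fun p : α × V => RKHS.kerFun E p.1 p.2
  obtain ⟨U, hU⟩ := exists_linearIsometryEquiv_of_inner_eq hdense (hrange ▸ hdense)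
    fun p q => by rw [← RKHS.kernel_inner, ← RKHS.kernel_inner, hφ]
  exact ⟨U, fun x v => hU (x, v)⟩

end Kolmogorov

section DFT

variable {N : ℕ} [NeZero N] {E : Type*} [NormedAddCommGroup E] [InnerProductSpace ℂ E]

lemma sum_inner_dft_dft (Φ Ψ : ZMod N → E) :
    ∑ k, ⟪𝓕 Φ k, 𝓕 Ψ k⟫_ℂ = N * ∑ k, ⟪Φ k, Ψ k⟫_ℂ := by
  have hdft (n : ZMod N) : ∑ k, ZMod.stdAddChar (k * n) • 𝓕 Ψ k = (N : ℂ) • Ψ n := by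
    simpa [ZMod.dft_apply (𝓕 Ψ)] using congrFun (ZMod.dft_dft Ψ) (-n)
  calc ∑ k, ⟪𝓕 Φ k, 𝓕 Ψ k⟫_ℂ
    _ = ∑ k, ∑ n, ⟪Φ n, ZMod.stdAddChar (k * n) • 𝓕 Ψ k⟫_ℂ := by
        simp only [ZMod.dft_apply Φ, sum_inner, inner_smul_left, inner_smul_right,
          ← AddChar.map_neg_eq_conj, neg_neg, mul_comm]
    _ = ∑ n, ⟪Φ n, (N : ℂ) • Ψ n⟫_ℂ := by
        rw [sum_comm]
        simp only [← inner_sum, hdft]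
    _ = N * ∑ n, ⟪Φ n, Ψ n⟫_ℂ := by simp only [inner_smul_right, mul_sum]

lemma dft_comp_add_right {M : Type*} [AddCommGroup M] [Module ℂ M] (Φ : ZMod N → M)
    (a k : ZMod N) :
    𝓕 (fun n => Φ (n + a)) k = ZMod.stdAddChar (a * k) • 𝓕 Φ k := by
  rw [ZMod.dft_apply, ZMod.dft_apply, smul_sum]
  refine Fintype.sum_equiv (Equiv.addRight a) _ _ fun n => ?_
  rw [smul_smul, ← AddChar.map_add_eq_mul, Equiv.coe_addRight]
  congr 2
  ring

lemma dft_map {M M' : Type*} [AddCommGroup M] [Module ℂ M] [AddCommGroup M'] [Module ℂ M']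
    (L : M →ₗ[ℂ] M') (Φ : ZMod N → M) (k : ZMod N) :
    𝓕 (fun n => L (Φ n)) k = L (𝓕 Φ k) := by
  simp only [ZMod.dft_apply, map_sum, map_smul]

lemma re_sum_inner_cyclic_le {T : E →L[ℂ] E} (hT : ∀ x, ‖⟪x, T x⟫_ℂ‖ ≤ ‖x‖ ^ 2)
    (Φ : ZMod N → E) : re (∑ n, ⟪Φ (n + 1), T (Φ n)⟫_ℂ) ≤ ∑ n, ‖Φ n‖ ^ 2 := by
  have hN : (0 : ℝ) < N := Nat.cast_pos.2 (NeZero.pos N)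
  have hre (z : ℂ) : re ((N : ℂ) * z) = N * re z := by simp
  refine le_of_mul_le_mul_left ?_ hN
  calc N * re (∑ n, ⟪Φ (n + 1), T (Φ n)⟫_ℂ)
    _ = re (∑ k, ⟪𝓕 (fun n => Φ (n + 1)) k, 𝓕 (fun n => T (Φ n)) k⟫_ℂ) := by
        rw [sum_inner_dft_dft, hre]
    _ = ∑ k, re ⟪ZMod.stdAddChar k • 𝓕 Φ k, T (𝓕 Φ k)⟫_ℂ := by
        simp only [dft_comp_add_right, one_mul, ← ContinuousLinearMap.coe_coe T, dft_map, map_sum]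
    _ ≤ ∑ k, ‖𝓕 Φ k‖ ^ 2 := by
        refine sum_le_sum fun k _ => (re_le_norm _).trans ?_
        rw [inner_smul_left, norm_mul, norm_conj, AddChar.norm_apply, one_mul]
        exact hT _
    _ = N * ∑ n, ‖Φ n‖ ^ 2 := by
        have h := congrArg re (sum_inner_dft_dft Φ Φ)
        simpa only [hre, map_sum, ← norm_sq_eq_re_inner] using h

lemma re_sum_inner_succ_le {T : E →L[ℂ] E} (hT : ∀ x, ‖⟪x, T x⟫_ℂ‖ ≤ ‖x‖ ^ 2) {k : ℕ → E}
    (hk : k 0 = 0) (N : ℕ) :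
    ∑ n ∈ range N, re ⟪k (n + 1), T (k n)⟫_ℂ ≤ ∑ n ∈ range N, ‖k (n + 1)‖ ^ 2 := by
  have hcyclic := re_sum_inner_cyclic_le hT fun n : ZMod (N + 1) => k n.val
  have hleft : re (∑ n : ZMod (N + 1), ⟪k (n + 1).val, T (k n.val)⟫_ℂ) =
      ∑ n ∈ range N, re ⟪k (n + 1), T (k n)⟫_ℂ := by
    change re (∑ n : Fin (N + 1), ⟪k (n + 1 : Fin (N + 1)), T (k n)⟫_ℂ) = _
    rw [Fin.sum_univ_castSucc, Finset.sum_range, map_add, map_sum]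
    simp [hk]
  have hright : ∑ n : ZMod (N + 1), ‖k n.val‖ ^ 2 = ∑ n ∈ range N, ‖k (n + 1)‖ ^ 2 := by
    change ∑ n : Fin (N + 1), ‖k n‖ ^ 2 = _
    rw [Fin.sum_univ_succ, Finset.sum_range]
    simp [hk]
  rwa [hleft, hright] at hcyclic

end DFT

section Toeplitz

variable {𝕜 V : Type*} [RCLike 𝕜] [NormedAddCommGroup V] [InnerProductSpace 𝕜 V] [CompleteSpace V]

lemma posSemidef_circulant_of_sum_range_nonneg {κ : ℤ → V →L[𝕜] V}
    (hstar : ∀ n, star (κ n) = κ (-n))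
    (hpos : ∀ (f : ℕ → V) (N : ℕ),
      0 ≤ re (∑ i ∈ range N, ∑ j ∈ range N, ⟪f i, κ (i - j) (f j)⟫_𝕜)) :
    (Matrix.circulant κ).PosSemidef := by
  have hinner (m n : ℤ) (v w : V) : ⟪κ (n - m) v, w⟫_𝕜 = ⟪v, κ (m - n) w⟫_𝕜 := by
    rw [← neg_sub, ← hstar, star_eq_adjoint, adjoint_inner_left]
  have hherm : (Matrix.circulant κ).IsHermitian := Matrix.ext fun m n => by simp [hstar]
  have hiff := (RKHS.posSemidef_tfae (K := Matrix.circulant κ)).out 0 2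
  refine hiff.2 ⟨hherm, fun f => ?_⟩
  obtain ⟨a, N, hsupp⟩ : ∃ (a : ℤ) (N : ℕ),
      f.support ⊆ (range N).map (Nat.castEmbedding.trans (addLeftEmbedding a)) := by
    obtain ⟨a, ha⟩ := f.support.bddBelow
    obtain ⟨b, hb⟩ := f.support.bddAbove
    exact ⟨a, (b + 1 - a).toNat, fun n hn => Int.Icc_eq_finset_map a b ▸ mem_Icc.2 ⟨ha hn, hb hn⟩⟩
  simp only [Matrix.circulant_apply, hinner]
  rw [Finsupp.sum_of_support_subset f hsupp _ fun m _ => by simp [Finsupp.sum]]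
  simpa [Finsupp.sum_of_support_subset f hsupp] using hpos (fun i => f (a + i)) N

end Toeplitz

/-- The moments of a unitary `ρ`-dilation of `T`: if `U` on `Y ⊇ X` is one, then the compression of
`U ^ n` to `X` is `dilationMoment ρ T n` for every `n : ℤ`. -/
def dilationMoment {X : Type*} [NormedAddCommGroup X] [InnerProductSpace ℂ X] [CompleteSpace X]
    (ρ : ℝ) (T : X →L[ℂ] X) : ℤ → X →L[ℂ] X
  | 0 => 1
  | (n + 1 : ℕ) => (ρ : ℂ)⁻¹ • T ^ (n + 1)
  | .negSucc n => (ρ : ℂ)⁻¹ • star T ^ (n + 1)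

section Moments

variable {X : Type*} [NormedAddCommGroup X] [InnerProductSpace ℂ X] [CompleteSpace X]
  {ρ : ℝ} {T : X →L[ℂ] X}

@[simp]
lemma dilationMoment_zero : dilationMoment ρ T 0 = 1 := rfl

lemma dilationMoment_natCast {n : ℕ} (hn : n ≠ 0) :
    dilationMoment ρ T n = (ρ : ℂ)⁻¹ • T ^ n := by
  cases n with
  | zero => contradiction
  | succ n => rfl

lemma star_dilationMoment (n : ℤ) : star (dilationMoment ρ T n) = dilationMoment ρ T (-n) := by
  match n with
  | 0 => exact star_one _
  | (n + 1 : ℕ) =>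
    change star ((ρ : ℂ)⁻¹ • T ^ (n + 1)) = (ρ : ℂ)⁻¹ • star T ^ (n + 1)
    simp
  | .negSucc n =>
    change star ((ρ : ℂ)⁻¹ • star T ^ (n + 1)) = (ρ : ℂ)⁻¹ • T ^ (n + 1)
    simp

end Moments

lemma memC1_of_posSemidef_circulant {X : Type} [NormedAddCommGroup X] [InnerProductSpace ℂ X]
    [CompleteSpace X] {ρ : ℝ} {T : X →L[ℂ] X} (hρ : ρ ≠ 0)
    (h : (Matrix.circulant (dilationMoment ρ T)).PosSemidef) : MemC1 ρ T := by
  have : Fact (Matrix.circulant (dilationMoment ρ T)).PosSemidef := ⟨h⟩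
  let H := RKHS.OfKernel (Matrix.circulant (dilationMoment ρ T))
  have hkernel (m n : ℤ) : RKHS.kernel H m n = dilationMoment ρ T (m - n) := by
    rw [RKHS.OfKernel.kernel_ofKernel, Matrix.circulant_apply]
  obtain ⟨U, hU⟩ := exists_linearIsometryEquiv_kerFun (E := H) (Equiv.subRight (1 : ℤ))
    fun m n => by simp [hkernel]
  have hpow (n : ℕ) (x : X) :
      ((U : H →L[ℂ] H) ^ n) (RKHS.kerFun H 0 x) = RKHS.kerFun H (-n : ℤ) x := by
    induction n with
    | zero => simp
    | succ n ih =>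
      rw [pow_succ', mul_apply_eq_comp, ih]
      simp [hU, sub_eq_add_neg, add_comm]
  have hmoment (n : ℕ) : adjoint (RKHS.kerFun H 0) ∘L (((U : H →L[ℂ] H) ^ n) ∘L RKHS.kerFun H 0) =
      dilationMoment ρ T n := by
    ext x
    rw [comp_apply, comp_apply, hpow, RKHS.adjoint_kerFun, RKHS.kerFun_apply, hkernel, zero_sub,
      neg_neg]
  refine ⟨{ Y := H, ι := RKHS.kerFun H 0, isom := ?_, U := U, unit := ?_, dil := fun n hn => ?_ }⟩
  · exact (isometry_iff_adjoint_comp_self _).2 (hmoment 0)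
  · rw [U.adjoint_eq_symm]
    constructor <;> ext <;> simp
  · rw [hmoment, dilationMoment_natCast (by lia), smul_inv_smul₀ (mod_cast hρ)]

section SzNagyFoias

/-- The quadratic form in Sz.-Nagy and Foiaş' description of `C_ρ`, where it is evaluated at
`a = h` and `b = z • T h` for `z` in the unit disc. -/
def szNagyFoiasForm {X : Type*} [NormedAddCommGroup X] [InnerProductSpace ℂ X] (ρ : ℝ)
    (a b : X) : ℝ :=
  ‖a‖ ^ 2 - 2 * (1 - ρ⁻¹) * re ⟪a, b⟫_ℂ + (1 - 2 * ρ⁻¹) * ‖b‖ ^ 2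

/-- Positivity of the Sz.-Nagy–Foiaş form summed along every path in `X` starting at `0`.
It characterizes `T ∈ C_ρ`, see `MemC1.isRhoPositive` and `IsRhoPositive.memC1`. -/
def IsRhoPositive {X : Type*} [NormedAddCommGroup X] [InnerProductSpace ℂ X] (ρ : ℝ)
    (T : X →L[ℂ] X) : Prop :=
  ∀ k : ℕ → X, k 0 = 0 → ∀ N : ℕ, 0 ≤ ∑ n ∈ range N, szNagyFoiasForm ρ (k (n + 1)) (T (k n))

lemma sum_pow_sub_apply_succ_sub {R M : Type*} [Semiring R] [TopologicalSpace M] [AddCommGroup M]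
    [Module R M] (T : M →L[R] M) {k : ℕ → M} (hk : k 0 = 0) (n : ℕ) :
    ∑ j ∈ range n, (T ^ (n - j)) (k (j + 1) - T (k j)) = T (k n) := by
  have hterm : ∀ j ∈ range n, (T ^ (n - j)) (k (j + 1) - T (k j)) =
      (T ^ (n + 1 - (j + 1))) (k (j + 1)) - (T ^ (n + 1 - j)) (k j) := fun j hj => by
    rw [map_sub, Nat.succ_sub (mem_range.1 hj).le, pow_succ, mul_apply_eq_comp,
      Nat.add_sub_add_right]
  rw [sum_congr rfl hterm, sum_range_sub fun j => (T ^ (n + 1 - j)) (k j)]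
  simp [hk]

variable {X : Type*} [NormedAddCommGroup X] [InnerProductSpace ℂ X] {ρ : ℝ} {T : X →L[ℂ] X}

@[simp]
lemma szNagyFoiasForm_zero_right (ρ : ℝ) (a : X) : szNagyFoiasForm ρ a 0 = ‖a‖ ^ 2 := by
  simp [szNagyFoiasForm]

lemma szNagyFoiasForm_eq_norm_sub_sq (ρ : ℝ) (a b : X) :
    szNagyFoiasForm ρ a b = ‖a - b‖ ^ 2 + 2 * (ρ⁻¹ * re ⟪a - b, b⟫_ℂ) := by
  rw [szNagyFoiasForm, norm_sub_sq (𝕜 := ℂ), inner_sub_left, map_sub, ← norm_sq_eq_re_inner]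
  ring

lemma szNagyFoiasForm_smul_smul {w : ℂ} (hw : ‖w‖ = 1) (ρ : ℝ) (a b : X) :
    szNagyFoiasForm ρ (w • a) (w • b) = szNagyFoiasForm ρ a b := by
  have hinner : ⟪w • a, w • b⟫_ℂ = ⟪a, b⟫_ℂ := by
    rw [inner_smul_left, inner_smul_right, ← mul_assoc, RCLike.conj_mul, hw]
    simp
  rw [szNagyFoiasForm, szNagyFoiasForm, hinner, norm_smul, norm_smul, hw, one_mul, one_mul]

lemma IsRhoPositive.szNagyFoiasForm_nonneg (hT : IsRhoPositive ρ T) {z : ℂ} (hz : ‖z‖ = 1)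
    (h : X) : 0 ≤ szNagyFoiasForm ρ h (z • T h) := by
  let w := conj z
  have hw : ‖w‖ = 1 := by rw [norm_conj, hz]
  have hwz : w * z = 1 := by rw [RCLike.conj_mul, hz]; simp
  let k : ℕ → X := fun n => n.casesOn 0 fun n => w ^ n • h
  have hterm (n : ℕ) : szNagyFoiasForm ρ (k (n + 2)) (T (k (n + 1))) =
      szNagyFoiasForm ρ h (z • T h) := by
    have hstep : T (k (n + 1)) = w ^ (n + 1) • z • T h := by
      rw [smul_smul, pow_succ, mul_assoc, hwz, mul_one, ← map_smul]
    rw [hstep]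
    exact szNagyFoiasForm_smul_smul (by rw [norm_pow, hw, one_pow]) ρ h _
  have hbound (N : ℕ) : 0 ≤ N * szNagyFoiasForm ρ h (z • T h) + ‖h‖ ^ 2 := by
    have hsum := hT k rfl (N + 1)
    have hfirst : szNagyFoiasForm ρ (k (0 + 1)) (T (k 0)) = ‖h‖ ^ 2 := by simp [k]
    rwa [sum_range_succ', hfirst, sum_congr rfl fun n _ => hterm n, sum_const, card_range,
      nsmul_eq_mul] at hsum
  by_contra! hneg
  obtain ⟨N, hN⟩ := Archimedean.arch (‖h‖ ^ 2 + 1) (neg_pos.2 hneg)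
  rw [nsmul_eq_mul] at hN
  linarith [hbound N]

lemma IsRhoPositive.mul_norm_inner_le (hT : IsRhoPositive ρ T) (hρ : 0 ≤ 2 / ρ - 1) (h : X) :
    (2 / ρ - 1) * ‖⟪h, T h⟫_ℂ‖ ≤ ‖h‖ ^ 2 := by
  rcases eq_or_ne h 0 with rfl | hh
  · simp
  obtain ⟨z, hz, hzh⟩ := RCLike.exists_norm_eq_mul_self ⟪h, T h⟫_ℂ
  have hform := hT.szNagyFoiasForm_nonneg (z := -z) (by rwa [norm_neg]) h
  have hre : re ⟪h, -z • T h⟫_ℂ = -‖⟪h, T h⟫_ℂ‖ := by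
    rw [inner_smul_right, neg_mul, ← hzh, map_neg, ofReal_re]
  rw [szNagyFoiasForm, hre, norm_smul, norm_neg, hz, one_mul] at hform
  have hcs : ‖⟪h, T h⟫_ℂ‖ ^ 2 ≤ ‖h‖ ^ 2 * ‖T h‖ ^ 2 := by
    rw [← mul_pow]
    gcongr
    exact norm_inner_le_norm h (T h)
  set x := ‖⟪h, T h⟫_ℂ‖
  have hpos : 0 < ‖h‖ ^ 2 := by positivity
  have hfactor : 0 ≤ (‖h‖ ^ 2 - (2 / ρ - 1) * x) * (‖h‖ ^ 2 + x) := by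
    rw [div_eq_mul_inv] at *
    nlinarith [mul_le_mul_of_nonneg_left hcs hρ, mul_nonneg hpos.le hform]
  have := nonneg_of_mul_nonneg_left hfactor (by positivity)
  linarith

lemma isRhoPositive_two_of_norm_inner_le (hT : ∀ x, ‖⟪x, T x⟫_ℂ‖ ≤ ‖x‖ ^ 2) :
    IsRhoPositive 2 T := fun k hk N => by
  have hform (n : ℕ) : szNagyFoiasForm 2 (k (n + 1)) (T (k n)) =
      ‖k (n + 1)‖ ^ 2 - re ⟪k (n + 1), T (k n)⟫_ℂ := by
    rw [szNagyFoiasForm]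
    ring
  simpa only [hform, sum_sub_distrib, sub_nonneg] using re_sum_inner_succ_le hT hk N

lemma half_norm_sq_sub_norm_sq_le_szNagyFoiasForm (hρ : 0 < ρ)
    (hT : 2 * (1 + 2 * ρ⁻¹) * ‖T‖ ≤ 1) (a x : X) :
    (‖a‖ ^ 2 - ‖x‖ ^ 2) / 2 ≤ szNagyFoiasForm ρ a (T x) := by
  have hinner : -(‖a - T x‖ * ‖T x‖) ≤ re ⟪a - T x, T x⟫_ℂ :=
    neg_le_of_abs_le ((abs_re_le_norm _).trans (norm_inner_le_norm _ _))
  have htriangle : ‖a‖ ^ 2 ≤ (‖a - T x‖ + ‖T x‖) ^ 2 := by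
    gcongr
    exact norm_le_norm_sub_add _ _
  set s := (1 + 2 * ρ⁻¹) * ‖T x‖
  have hTs : ‖T x‖ ^ 2 ≤ s ^ 2 := by
    gcongr
    exact le_mul_of_one_le_left (norm_nonneg _) (by linarith [inv_pos.2 hρ])
  have hsx : (2 * s) ^ 2 ≤ ‖x‖ ^ 2 := by
    gcongr
    have hm : 0 ≤ 2 * (1 + 2 * ρ⁻¹) := by positivity
    linarith [mul_le_mul_of_nonneg_left (T.le_opNorm x) hm,
      mul_le_mul_of_nonneg_right hT (norm_nonneg x)]
  have hscaled := mul_le_mul_of_nonneg_left hinner (inv_pos.2 hρ).le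
  rw [szNagyFoiasForm_eq_norm_sub_sq]
  linarith [sq_nonneg (‖a - T x‖ - s), sq_nonneg s]

lemma isRhoPositive_of_opNorm_le (hρ : 0 < ρ) (hT : 2 * (1 + 2 * ρ⁻¹) * ‖T‖ ≤ 1) :
    IsRhoPositive ρ T := fun k hk N => by
  have htelescope : ∑ n ∈ range N, (‖k (n + 1)‖ ^ 2 - ‖k n‖ ^ 2) / 2 = ‖k N‖ ^ 2 / 2 := by
    rw [← sum_div, sum_range_sub (fun n => ‖k n‖ ^ 2), hk, norm_zero]
    ring
  calc 0 ≤ ‖k N‖ ^ 2 / 2 := by positivity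
    _ = ∑ n ∈ range N, (‖k (n + 1)‖ ^ 2 - ‖k n‖ ^ 2) / 2 := htelescope.symm
    _ ≤ _ := sum_le_sum fun n _ => half_norm_sq_sub_norm_sq_le_szNagyFoiasForm hρ hT _ _

lemma IsRhoPositive.comp_adjoint {Y : Type*} [CompleteSpace X] [NormedAddCommGroup Y]
    [InnerProductSpace ℂ Y] [CompleteSpace Y] (hT : IsRhoPositive ρ T) {j : X →L[ℂ] Y}
    (hj : Isometry j) : IsRhoPositive ρ (j ∘L T ∘L adjoint j) := fun k hk N => by
  have hnorm (y : Y) : ‖adjoint j y‖ ≤ ‖y‖ := by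
    refine (adjoint j).le_of_opNorm_le ?_ y |>.trans_eq (one_mul _)
    rw [LinearIsometryEquiv.norm_map]
    exact j.opNorm_le_bound zero_le_one fun x => by
      rw [hj.norm_map_of_map_zero (map_zero j), one_mul]
  have hform (a : Y) (x : X) :
      szNagyFoiasForm ρ (adjoint j a) x ≤ szNagyFoiasForm ρ a (j x) := by
    rw [szNagyFoiasForm, szNagyFoiasForm, adjoint_inner_left,
      hj.norm_map_of_map_zero (map_zero j)]
    gcongr
    exact hnorm a
  calc 0 ≤ ∑ n ∈ range N, szNagyFoiasForm ρ (adjoint j (k (n + 1))) (T (adjoint j (k n))) :=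
        hT (fun n => adjoint j (k n)) (by simp [hk]) N
    _ ≤ _ := sum_le_sum fun n _ => hform _ _

end SzNagyFoias

section Dilation

variable {X : Type*} [NormedAddCommGroup X] [InnerProductSpace ℂ X] [CompleteSpace X]
  {ρ : ℝ} {T : X →L[ℂ] X}

lemma IsRhoPositive.posSemidef_circulant (hT : IsRhoPositive ρ T) :
    (Matrix.circulant (dilationMoment ρ T)).PosSemidef := by
  refine posSemidef_circulant_of_sum_range_nonneg star_dilationMoment fun h N => ?_
  let k : ℕ → X := fun n => n.rec 0 fun n x => T x + h n
  have hk (n : ℕ) : k (n + 1) - T (k n) = h n := add_sub_cancel_left _ _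
  have hherm (i j : ℕ) : conj ⟪h i, dilationMoment ρ T (i - j) (h j)⟫_ℂ =
      ⟪h j, dilationMoment ρ T (j - i) (h i)⟫_ℂ := by
    rw [inner_conj_symm, ← neg_sub (j : ℤ), ← star_dilationMoment, star_eq_adjoint,
      adjoint_inner_left]
  have hlower (n : ℕ) : ∑ j ∈ range n, ⟪h n, dilationMoment ρ T (n - j) (h j)⟫_ℂ =
      (ρ : ℂ)⁻¹ * ⟪h n, T (k n)⟫_ℂ := by
    rw [← sum_pow_sub_apply_succ_sub T (k := k) rfl n, inner_sum, mul_sum]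
    refine sum_congr rfl fun j hj => ?_
    have hjn := mem_range.1 hj
    rw [← Nat.cast_sub hjn.le, dilationMoment_natCast (by lia), hk, smul_apply, inner_smul_right]
  rw [re_sum_range_sum_range_of_conj_symm hherm]
  convert hT k rfl N using 2 with n
  rw [hlower, szNagyFoiasForm_eq_norm_sub_sq, hk, re_ofReal_inv_mul, sub_self, dilationMoment_zero,
    one_apply_eq_self, ← norm_sq_eq_re_inner]

lemma MemC1.isRhoPositive (hρ : ρ ≠ 0) (hT : MemC1 ρ T) : IsRhoPositive ρ T := fun k hk N => by
  obtain ⟨Y, ι, hι, U, hU, hdil⟩ := hT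
  let h : ℕ → X := fun n => k (n + 1) - T (k n)
  let y : ℕ → Y := fun n => ∑ j ∈ range n, (U ^ (n - j)) (ι (h j))
  have hysucc (n : ℕ) : y (n + 1) = U (y n + ι (h n)) := by
    have hterm : ∀ j ∈ range n, (U ^ (n + 1 - j)) (ι (h j)) = U ((U ^ (n - j)) (ι (h j))) :=
      fun j hj => by rw [Nat.succ_sub (mem_range.1 hj).le, pow_succ', mul_apply_eq_comp]
    simp only [y, sum_range_succ, sum_congr rfl hterm, map_add, map_sum,
      Nat.add_sub_cancel_left, pow_one]
  have hyadj (n : ℕ) : adjoint ι (y n) = (ρ : ℂ)⁻¹ • T (k n) := by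
    rw [← sum_pow_sub_apply_succ_sub T hk n, map_sum, smul_sum]
    refine sum_congr rfl fun j hj => ?_
    have hjn := mem_range.1 hj
    rw [hdil _ (by lia), smul_apply, inv_smul_smul₀ (mod_cast hρ)]
    rfl
  have hUnorm : ∀ v, ‖U v‖ = ‖v‖ := (norm_map_iff_adjoint_comp_self U).2 hU.2
  have henergy : ‖y N‖ ^ 2 = ∑ n ∈ range N, szNagyFoiasForm ρ (k (n + 1)) (T (k n)) := by
    induction N with
    | zero => simp [y]
    | succ N ih =>
      rw [sum_range_succ, ← ih, hysucc, hUnorm, norm_add_sq (𝕜 := ℂ), ← adjoint_inner_left, hyadj,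
        hι.norm_map_of_map_zero (map_zero ι), szNagyFoiasForm_eq_norm_sub_sq, inner_re_symm,
        inner_smul_right, re_ofReal_inv_mul]
      ring
  rw [← henergy]
  positivity

lemma MemC1.of_isometry {Y : Type*} [NormedAddCommGroup Y] [InnerProductSpace ℂ Y]
    [CompleteSpace Y] {j : X →L[ℂ] Y} (hj : Isometry j)
    (h : MemC1 ρ (j ∘L T ∘L adjoint j)) : MemC1 ρ T := by
  obtain ⟨Z, ι, hι, U, hU, hdil⟩ := h
  have hjj (x : X) : adjoint j (j x) = x :=
    DFunLike.congr_fun ((isometry_iff_adjoint_comp_self j).1 hj) x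
  have hpow (n : ℕ) (x : X) : (T ^ n) x = adjoint j (((j ∘L T ∘L adjoint j) ^ n) (j x)) := by
    induction n generalizing x with
    | zero => simp [hjj]
    | succ n ih => simp [pow_succ, ih, hjj]
  refine ⟨{ Y := Z, ι := ι ∘L j, isom := hι.comp hj, U := U, unit := hU, dil := fun n hn => ?_ }⟩
  ext x
  rw [hpow, hdil n hn]
  simp [adjoint_comp]

lemma IsRhoPositive.memC1 {Y : Type} [NormedAddCommGroup Y] [InnerProductSpace ℂ Y]
    [CompleteSpace Y] {j : X →L[ℂ] Y} (hj : Isometry j) (hρ : ρ ≠ 0) (hT : IsRhoPositive ρ T) :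
    MemC1 ρ T :=
  .of_isometry hj (memC1_of_posSemidef_circulant hρ (hT.comp_adjoint hj).posSemidef_circulant)

end Dilation

section OperatorRadius

variable {X : Type*} [NormedAddCommGroup X] [InnerProductSpace ℂ X] [CompleteSpace X]

lemma MemC1.two_smul {ρ : ℝ} {T : X →L[ℂ] X} (hT : MemC1 ρ T) (hc : 0 ≤ 2 / ρ - 1) :
    MemC1 2 (((2 / ρ - 1 : ℝ) : ℂ) • T) := by
  have hρ : ρ ≠ 0 := by
    rintro rfl
    norm_num at hc
  obtain ⟨Y, ι, hι, -⟩ := id hT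
  refine (isRhoPositive_two_of_norm_inner_le fun x => ?_).memC1 hι two_ne_zero
  rw [smul_apply, inner_smul_right, norm_mul, Complex.norm_of_nonneg hc]
  exact (hT.isRhoPositive hρ).mul_norm_inner_le hc x

-- Dilation spaces live in `Type`, so `C_σ ≠ ∅` is a restriction on the size of `X`.
lemma MemC1.exists_inv_smul {σ ρ : ℝ} {T : X →L[ℂ] X} (hT : MemC1 σ T) (hρ : 0 < ρ)
    (A : X →L[ℂ] X) : ∃ u : ℝ, 0 < u ∧ MemC1 ρ ((u : ℂ)⁻¹ • A) := by
  obtain ⟨Y, ι, hι, -⟩ := hT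
  let u : ℝ := 2 * (1 + 2 * ρ⁻¹) * ‖A‖ + 1
  have hu : 0 < u := by positivity
  refine ⟨u, hu, (isRhoPositive_of_opNorm_le hρ ?_).memC1 hι hρ.ne'⟩
  rw [norm_smul, norm_inv, Complex.norm_of_nonneg hu.le, mul_left_comm, inv_mul_le_one₀ hu]
  exact (lt_add_one _).le

lemma wRad1_nonneg (ρ : ℝ) (A : X →L[ℂ] X) : 0 ≤ wRad1 ρ A :=
  Real.sInf_nonneg fun _ hu => hu.1.le

lemma wRad1_le {ρ u : ℝ} {A : X →L[ℂ] X} (hu : 0 < u) (h : MemC1 ρ ((u : ℂ)⁻¹ • A)) :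
    wRad1 ρ A ≤ u :=
  csInf_le ⟨0, fun _ hv => hv.1.le⟩ ⟨hu, h⟩

theorem wRad1_lower_bound_general (A : X →L[ℂ] X) (ρ : ℝ) (hρ : 0 < ρ) :
    (2 / ρ - 1) * wRad1 2 A ≤ wRad1 ρ A := by
  rcases le_or_gt (2 / ρ - 1) 0 with hc | hc
  · exact (mul_nonpos_of_nonpos_of_nonneg hc (wRad1_nonneg 2 A)).trans (wRad1_nonneg ρ A)
  rcases Set.eq_empty_or_nonempty {u : ℝ | 0 < u ∧ MemC1 ρ ((u : ℂ)⁻¹ • A)} with hempty | hne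
  · have hempty_two : {u : ℝ | 0 < u ∧ MemC1 2 ((u : ℂ)⁻¹ • A)} = ∅ :=
      Set.eq_empty_of_forall_notMem fun u hu =>
        (Set.nonempty_iff_ne_empty.1 (hu.2.exists_inv_smul hρ A)) hempty
    rw [wRad1, wRad1, hempty, hempty_two, Real.sInf_empty, mul_zero]
  · refine le_csInf hne fun u ⟨hu, hmem⟩ => ?_
    rw [← le_div_iff₀' hc]
    refine wRad1_le (div_pos hu hc) ?_
    have hscale : ((u / (2 / ρ - 1) : ℝ) : ℂ)⁻¹ • A =
        ((2 / ρ - 1 : ℝ) : ℂ) • (u : ℂ)⁻¹ • A := by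
      rw [smul_smul, ← Complex.ofReal_inv, inv_div, Complex.ofReal_div, div_eq_mul_inv]
    exact hscale ▸ hmem.two_smul hc.le

end OperatorRadius

/-- for `0 < ρ ≤ 1` one has `w_ρ(A) ≥ (2/ρ − 1)·w₂(A)`. -/
theorem wRad1_lower_bound {X : Type*} [NormedAddCommGroup X] [InnerProductSpace ℂ X]
    [CompleteSpace X] (A : X →L[ℂ] X) (ρ : ℝ) (hρ0 : 0 < ρ) (hρ1 : ρ ≤ 1) :
    (2 / ρ - 1) * wRad1 2 A ≤ wRad1 ρ A :=
  wRad1_lower_bound_general A ρ hρ0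
end
end
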